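/- Let Λ and Λ' be lattices in ℂ, both with complex multiplication by R, such that g₂(Λ) and g₃(Λ) are algebraic over ℚ. Let α ∈ ℂ be nonzero with α·Λ ⊆ Λ'. Then α is algebraic over ℚ if and only if g₂(Λ') and g₃(Λ') are both algebraic over ℚ. -/

import Mathlib

open NumberField

/-- The Eisenstein series `g₂` of an additive subgroup of `ℂ`. -/
noncomputable def g₂ (Λ : AddSubgroup ℂ) : ℂ :=
  60 * ∑' w : {w : ℂ // w ∈ Λ ∧ w ≠ 0}, ((w : ℂ) ^ 4)⁻¹

/-- The Eisenstein series `g₃` of an additive subgroup of `ℂ`. -/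
noncomputable def g₃ (Λ : AddSubgroup ℂ) : ℂ :=
  140 * ∑' w : {w : ℂ // w ∈ Λ ∧ w ≠ 0}, ((w : ℂ) ^ 6)⁻¹

/-!
The invariants `g₂`, `g₃` determine `℘` through `y'² = 4y³ - g₂y - g₃`. Uniqueness of its solution
with leading term `z⁻²` yields the duplication formula, a rational map over `ℚ(g₂, g₃)`. On torsion
points of `ℂ / L` the doubling map is preperiodic, so their `℘`-values are algebraic over
`ℚ(g₂, g₃)`. If `M ≤ L` are lattices, then `G₄` and `G₆` of `L` split over the cosets of `M` into
sums which are polynomials in `g₂`, `g₃` and the torsion values of `℘` for `M`; thus algebraicity of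
the invariants is unchanged by passing between a lattice and a sublattice. Applied to `α • Λ ≤ Λ'`,
this leaves the invariants `α⁻⁴g₂`, `α⁻⁶g₃` of `α • Λ`, and `g₂`, `g₃` do not both vanish.
-/

open Filter Polynomial Topology
open scoped PeriodPair

section WeierstrassEquation

variable {𝕜 : Type*} [NontriviallyNormedField 𝕜] {f y₁ y₂ : 𝕜 → 𝕜} {c : 𝕜}

theorem meromorphicOrderAt_eq_neg_of_tendsto {m : ℕ} {l : 𝕜} (hf : MeromorphicAt f c)
    (hl : l ≠ 0) (hlim : Tendsto (fun z ↦ (z - c) ^ m * f z) (𝓝[≠] c) (𝓝 l)) :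
    meromorphicOrderAt f c = (-m : ℤ) := by
  have hmul := (tendsto_ne_zero_iff_meromorphicOrderAt_eq_zero
    (f := fun z ↦ (z - c) ^ m * f z) (by fun_prop)).mp ⟨l, hl, hlim⟩
  rw [fun_meromorphicOrderAt_mul (by fun_prop) hf, fun_meromorphicOrderAt_pow_id_sub_const] at hmul
  cases h : meromorphicOrderAt f c with
  | top => simp [h] at hmul
  | coe n =>
    rw [h] at hmul
    norm_cast at hmul ⊢
    omega

theorem neg_lt_meromorphicOrderAt_of_tendsto_zero {m : ℕ} (hf : MeromorphicAt f c)
    (hlim : Tendsto (fun z ↦ (z - c) ^ m * f z) (𝓝[≠] c) (𝓝 0)) :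
    (-m : ℤ) < meromorphicOrderAt f c := by
  have hmul := (tendsto_zero_iff_meromorphicOrderAt_pos
    (f := fun z ↦ (z - c) ^ m * f z) (by fun_prop)).mp hlim
  rw [fun_meromorphicOrderAt_mul (by fun_prop) hf, fun_meromorphicOrderAt_pow_id_sub_const] at hmul
  cases h : meromorphicOrderAt f c with
  | top => exact WithTop.coe_lt_top _
  | coe n =>
    rw [h] at hmul
    have : (0 : ℤ) < m + n := by exact_mod_cast hmul
    exact_mod_cast (by omega : -(m : ℤ) < n)

variable [CompleteSpace 𝕜]

theorem tendsto_sub_mul_logDeriv {n : ℤ} (hf : MeromorphicAt f c)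
    (hn : meromorphicOrderAt f c = n) :
    Tendsto (fun z ↦ (z - c) * logDeriv f z) (𝓝[≠] c) (𝓝 n) := by
  obtain ⟨g, hg, hgc, hfg⟩ := (meromorphicOrderAt_eq_int_iff hf).mp hn
  have hlim : Tendsto (fun z ↦ n + (z - c) * logDeriv g z) (𝓝[≠] c) (𝓝 n) := by
    have hcont : ContinuousAt (fun z ↦ n + (z - c) * logDeriv g z) c := by
      have := (hg.deriv.div hg hgc).continuousAt
      unfold logDeriv
      fun_prop
    simpa using hcont.tendsto.mono_left nhdsWithin_le_nhds
  refine hlim.congr' ?_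
  filter_upwards [logDeriv_congr_nhdsNE hfg, self_mem_nhdsWithin,
    nhdsWithin_le_nhds hg.eventually_analyticAt,
    nhdsWithin_le_nhds (hg.continuousAt.eventually_ne hgc)] with z hz hzc hgz hgz0
  have hzc : z - c ≠ 0 := sub_ne_zero.mpr hzc
  simp only [smul_eq_mul] at hz
  rw [hz, logDeriv_mul (f := fun z ↦ (z - c) ^ n) z (zpow_ne_zero n hzc) hgz0
    (by fun_prop (disch := grind)) hgz.differentiableAt, logDeriv_fun_zpow (by fun_prop) n]
  simp only [logDeriv_apply, deriv_sub_const_fun, deriv_id'']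
  field_simp

theorem tendsto_sub_pow_succ_mul_deriv {m : ℕ} {l : 𝕜} (hf : MeromorphicAt f c)
    (hl : l ≠ 0) (hlim : Tendsto (fun z ↦ (z - c) ^ m * f z) (𝓝[≠] c) (𝓝 l)) :
    Tendsto (fun z ↦ (z - c) ^ (m + 1) * deriv f z) (𝓝[≠] c) (𝓝 (-m * l)) := by
  have hlog := tendsto_sub_mul_logDeriv hf (meromorphicOrderAt_eq_neg_of_tendsto hf hl hlim)
  push_cast at hlog
  refine (hlog.mul hlim).congr' ?_
  filter_upwards [hlim.eventually_ne hl] with z hz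
  have hfz : f z ≠ 0 := right_ne_zero_of_mul hz
  rw [logDeriv_apply]
  field_simp
  ring

-- If `y₁ - y₂` had finite order `n` at `c`, dividing the difference of the two equations by it and
-- comparing leading terms would give `n * (-4) = 12`, but `y₁ - y₂` has order greater than `-2`.
theorem eventuallyEq_of_deriv_sq_eq_cubic [CharZero 𝕜] {a b : 𝕜}
    (hy₁ : MeromorphicAt y₁ c) (hy₂ : MeromorphicAt y₂ c)
    (hlim₁ : Tendsto (fun z ↦ (z - c) ^ 2 * y₁ z) (𝓝[≠] c) (𝓝 1))
    (hlim₂ : Tendsto (fun z ↦ (z - c) ^ 2 * y₂ z) (𝓝[≠] c) (𝓝 1))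
    (hode₁ : ∀ᶠ z in 𝓝[≠] c, deriv y₁ z ^ 2 = 4 * y₁ z ^ 3 - a * y₁ z - b)
    (hode₂ : ∀ᶠ z in 𝓝[≠] c, deriv y₂ z ^ 2 = 4 * y₂ z ^ 3 - a * y₂ z - b) :
    y₁ =ᶠ[𝓝[≠] c] y₂ := by
  have hw : MeromorphicAt (y₁ - y₂) c := hy₁.sub hy₂
  have horder := neg_lt_meromorphicOrderAt_of_tendsto_zero (m := 2) hw
    (by simpa [mul_sub] using hlim₁.sub hlim₂)
  cases hn : meromorphicOrderAt (y₁ - y₂) c with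
  | top => exact (meromorphicOrderAt_eq_top_iff.mp hn).mono fun z hz ↦ sub_eq_zero.mp hz
  | coe n =>
    exfalso
    have hleft : Tendsto (fun z ↦ ((z - c) * logDeriv (y₁ - y₂) z) *
        ((z - c) ^ 3 * deriv y₁ z + (z - c) ^ 3 * deriv y₂ z)) (𝓝[≠] c) (𝓝 (n * -4)) := by
      convert (tendsto_sub_mul_logDeriv hw hn).mul
        ((tendsto_sub_pow_succ_mul_deriv hy₁ one_ne_zero hlim₁).add
          (tendsto_sub_pow_succ_mul_deriv hy₂ one_ne_zero hlim₂)) using 2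
      norm_num
    have hright : Tendsto (fun z ↦ 4 * (((z - c) ^ 2 * y₁ z) ^ 2 +
        ((z - c) ^ 2 * y₁ z) * ((z - c) ^ 2 * y₂ z) + ((z - c) ^ 2 * y₂ z) ^ 2) - a * (z - c) ^ 4)
        (𝓝[≠] c) (𝓝 12) := by
      have hcont : Continuous fun z ↦ a * (z - c) ^ 4 := by fun_prop
      convert ((((hlim₁.pow 2).add (hlim₁.mul hlim₂)).add (hlim₂.pow 2)).const_mul 4).sub
        (hcont.tendsto c |>.mono_left nhdsWithin_le_nhds) using 2
      norm_num
    have hleading := tendsto_nhds_unique (hleft.congr' ?_) hright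
    · have : n * (-4) = 12 := by exact_mod_cast hleading
      have : -2 < n := by exact_mod_cast hn ▸ horder
      omega
    filter_upwards [hode₁, hode₂, hy₁.eventually_analyticAt, hy₂.eventually_analyticAt,
      (meromorphicOrderAt_ne_top_iff_eventually_ne_zero hw).mp (by simp [hn])]
      with z hode₁ hode₂ hy₁ hy₂ hwz
    have hwz : y₁ z - y₂ z ≠ 0 := hwz
    rw [logDeriv_apply, deriv_sub hy₁.differentiableAt hy₂.differentiableAt, Pi.sub_apply]
    field_simp
    linear_combination (z - c) ^ 4 * (hode₁ - hode₂)

end WeierstrassEquation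

theorem eqOn_compl_countable_of_eventuallyEq {f g : ℂ → ℂ} {S : Set ℂ} {c : ℂ} (hS : S.Countable)
    (hf : AnalyticOnNhd ℂ f Sᶜ) (hg : AnalyticOnNhd ℂ g Sᶜ) (hfg : f =ᶠ[𝓝[≠] c] g) :
    Set.EqOn f g Sᶜ := by
  obtain ⟨U, hU, hcU, hUfg⟩ := mem_nhdsWithin.mp hfg
  obtain ⟨w, hwU, hwS⟩ := (hS.insert c).dense_compl ℂ |>.inter_open_nonempty U hU ⟨c, hcU⟩
  rw [Set.mem_compl_iff, Set.mem_insert_iff, not_or] at hwS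
  have hnear : f =ᶠ[𝓝 w] g := by
    filter_upwards [hU.mem_nhds hwU, isOpen_ne.mem_nhds hwS.1] with z hzU hzc
    exact hUfg ⟨hzU, hzc⟩
  exact hf.eqOn_of_preconnected_of_eventuallyEq hg
    (hS.isConnected_compl_of_one_lt_rank (by simp)).isPreconnected hwS.2 hnear

theorem tendsto_const_mul_nhdsNE_zero {𝕜 : Type*} [NormedField 𝕜] {r : 𝕜} (hr : r ≠ 0) :
    Tendsto (fun z ↦ r * z) (𝓝[≠] 0) (𝓝[≠] 0) := by
  have hcont : Continuous fun z ↦ r * z := by fun_prop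
  refine tendsto_nhdsWithin_of_tendsto_nhds_of_eventually_within _
    ((hcont.tendsto' 0 0 (mul_zero r)).mono_left nhdsWithin_le_nhds) ?_
  filter_upwards [self_mem_nhdsWithin] with z hz using mul_ne_zero hr hz

section DuplicationMap

/-- The Lattès map of the Weierstrass curve `Y ^ 2 = 4 * X ^ 3 - a * X - b`, which expresses the
abscissa of `2 • P` through that of `P`. At the abscissas of 2-torsion points, where the value
should be `∞`, it takes the junk value `0`. -/
noncomputable def duplicationMap {F : Type*} [Field F] (a b x : F) : F :=
  (16 * x ^ 4 + 8 * a * x ^ 2 + 32 * b * x + a ^ 2) / (16 * (4 * x ^ 3 - a * x - b))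

variable {𝕜 : Type*} [NontriviallyNormedField 𝕜] {y : 𝕜 → 𝕜}

theorem tendsto_pow_six_mul_cubic (a b : 𝕜)
    (hy : Tendsto (fun z ↦ z ^ 2 * y z) (𝓝[≠] 0) (𝓝 1)) :
    Tendsto (fun z ↦ z ^ 6 * (4 * y z ^ 3 - a * y z - b)) (𝓝[≠] 0) (𝓝 4) := by
  have hz : Tendsto (fun z : 𝕜 ↦ z) (𝓝[≠] 0) (𝓝 0) := nhdsWithin_le_nhds
  convert (((hy.pow 3).const_mul 4).sub ((hy.mul (hz.pow 4)).const_mul a)).sub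
    ((hz.pow 6).const_mul b) using 2
  · ring
  · norm_num

theorem hasDerivAt_cubic (a b x : 𝕜) :
    HasDerivAt (fun x ↦ 4 * x ^ 3 - a * x - b) (12 * x ^ 2 - a) x := by
  refine ((((hasDerivAt_pow 3 x).const_mul 4).sub
    ((hasDerivAt_id x).const_mul a)).sub_const b).congr_deriv ?_
  norm_num
  ring

variable [CharZero 𝕜]

theorem eventually_cubic_ne_zero (a b : 𝕜)
    (hy : Tendsto (fun z ↦ z ^ 2 * y z) (𝓝[≠] 0) (𝓝 1)) :
    ∀ᶠ z in 𝓝[≠] 0, 4 * y z ^ 3 - a * y z - b ≠ 0 :=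
  ((tendsto_pow_six_mul_cubic a b hy).eventually_ne (by norm_num)).mono
    fun _ ↦ right_ne_zero_of_mul

theorem tendsto_sq_mul_duplicationMap (a b : 𝕜)
    (hy : Tendsto (fun z ↦ z ^ 2 * y z) (𝓝[≠] 0) (𝓝 1)) :
    Tendsto (fun z ↦ z ^ 2 * duplicationMap a b (y z)) (𝓝[≠] 0) (𝓝 4⁻¹) := by
  have hz : Tendsto (fun z : 𝕜 ↦ z) (𝓝[≠] 0) (𝓝 0) := nhdsWithin_le_nhds
  have hnum : Tendsto (fun z ↦ z ^ 8 * (16 * y z ^ 4 + 8 * a * y z ^ 2 + 32 * b * y z + a ^ 2))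
      (𝓝[≠] 0) (𝓝 16) := by
    convert ((((hy.pow 4).const_mul 16).add (((hy.pow 2).mul (hz.pow 4)).const_mul (8 * a))).add
      ((hy.mul (hz.pow 6)).const_mul (32 * b))).add ((hz.pow 8).const_mul (a ^ 2)) using 2
    · ring
    · norm_num
  have hquot := hnum.div ((tendsto_pow_six_mul_cubic a b hy).const_mul 16) (by norm_num)
  rw [show (16 / (16 * 4) : 𝕜) = 4⁻¹ by norm_num] at hquot
  refine hquot.congr' ?_
  filter_upwards [self_mem_nhdsWithin, eventually_cubic_ne_zero a b hy] with z hz hcubic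
  have hz : z ≠ 0 := hz
  rw [Pi.div_apply, duplicationMap]
  generalize 4 * y z ^ 3 - a * y z - b = N at hcubic ⊢
  field_simp

theorem hasDerivAt_duplicationMap {a b x : 𝕜} (hx : 4 * x ^ 3 - a * x - b ≠ 0) :
    HasDerivAt (duplicationMap a b)
      (((64 * x ^ 3 + 16 * a * x + 32 * b) * (16 * (4 * x ^ 3 - a * x - b)) -
        (16 * x ^ 4 + 8 * a * x ^ 2 + 32 * b * x + a ^ 2) * (16 * (12 * x ^ 2 - a))) /
        (16 * (4 * x ^ 3 - a * x - b)) ^ 2) x := by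
  have hnum : HasDerivAt (fun x ↦ 16 * x ^ 4 + 8 * a * x ^ 2 + 32 * b * x + a ^ 2)
      (64 * x ^ 3 + 16 * a * x + 32 * b) x := by
    refine (((((hasDerivAt_pow 4 x).const_mul 16).add ((hasDerivAt_pow 2 x).const_mul (8 * a))).add
      ((hasDerivAt_id x).const_mul (32 * b))).add_const (a ^ 2)).congr_deriv ?_
    norm_num
    ring
  exact hnum.div ((hasDerivAt_cubic a b x).const_mul 16) (mul_ne_zero (by norm_num) hx)

theorem deriv_duplicationMap_sq_mul_cubic {a b x : 𝕜} (hx : 4 * x ^ 3 - a * x - b ≠ 0) :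
    deriv (duplicationMap a b) x ^ 2 * (4 * x ^ 3 - a * x - b) =
      4 * (4 * duplicationMap a b x ^ 3 - a * duplicationMap a b x - b) := by
  rw [(hasDerivAt_duplicationMap hx).deriv, duplicationMap]
  generalize hN : 4 * x ^ 3 - a * x - b = N at hx ⊢
  field_simp
  subst hN
  ring

end DuplicationMap

section WeierstrassP

variable (L : PeriodPair)

theorem eventually_notMem_lattice : ∀ᶠ z in 𝓝[≠] 0, z ∉ L.lattice := by
  filter_upwards [nhdsWithin_le_nhds (L.compl_lattice_sdiff_singleton_mem_nhds 0),
    self_mem_nhdsWithin] with z hz hz0 hmem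
  exact hz ⟨hmem, hz0⟩

theorem countable_lattice : (L.lattice : Set ℂ).Countable :=
  Set.countable_coe_iff.mp (inferInstanceAs (Countable L.lattice))

theorem tendsto_sq_mul_weierstrassP : Tendsto (fun z ↦ z ^ 2 * ℘[L] z) (𝓝[≠] 0) (𝓝 1) := by
  have hcont : ContinuousAt (fun z ↦ z ^ 2 * L.weierstrassPExcept 0 z + 1) 0 := by
    have := (L.analyticAt_weierstrassPExcept 0).continuousAt
    fun_prop
  have hlim := hcont.tendsto.mono_left (nhdsWithin_le_nhds (s := {0}ᶜ))
  rw [zero_pow two_ne_zero, zero_mul, zero_add] at hlim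
  refine hlim.congr' ?_
  filter_upwards [self_mem_nhdsWithin] with z hz
  simpa [Set.mem_compl_singleton_iff.mp hz] using
    (L.ite_eq_one_sub_sq_mul_weierstrassP 0 (zero_mem _) z).symm

variable {L}

theorem hasDerivAt_weierstrassP {z : ℂ} (hz : z ∉ L.lattice) : HasDerivAt ℘[L] (℘'[L] z) z := by
  rw [← L.deriv_weierstrassP]
  exact (L.analyticOnNhd_weierstrassP z hz).differentiableAt.hasDerivAt

theorem eventuallyEq_weierstrassP_of_deriv_sq_eq {y : ℂ → ℂ} (hy : MeromorphicAt y 0)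
    (hlim : Tendsto (fun z ↦ z ^ 2 * y z) (𝓝[≠] 0) (𝓝 1))
    (hode : ∀ᶠ z in 𝓝[≠] 0, deriv y z ^ 2 = 4 * y z ^ 3 - L.g₂ * y z - L.g₃) :
    ℘[L] =ᶠ[𝓝[≠] 0] y := by
  refine eventuallyEq_of_deriv_sq_eq_cubic (L.meromorphic_weierstrassP 0) hy
    (by simpa using tendsto_sq_mul_weierstrassP L) (by simpa using hlim) ?_ hode
  filter_upwards [eventually_notMem_lattice L] with z hz
  rw [L.deriv_weierstrassP, L.derivWeierstrassP_sq z hz]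

theorem eventuallyEq_duplicationMap_weierstrassP (L : PeriodPair) :
    ℘[L] =ᶠ[𝓝[≠] 0] fun z ↦ duplicationMap L.g₂ L.g₃ (℘[L] (2⁻¹ * z)) := by
  have hhalf := tendsto_const_mul_nhdsNE_zero (inv_ne_zero (two_ne_zero' ℂ))
  refine eventuallyEq_weierstrassP_of_deriv_sq_eq ?_ ?_ ?_
  · have hhalf_mero : MeromorphicAt (fun z ↦ ℘[L] (2⁻¹ * z)) 0 :=
      (L.meromorphic_weierstrassP _).comp_analyticAt (by fun_prop)
    unfold duplicationMap
    fun_prop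
  · convert ((tendsto_sq_mul_duplicationMap L.g₂ L.g₃ (tendsto_sq_mul_weierstrassP L)).comp
      hhalf).const_mul 4 using 2
    · simp only [Function.comp_apply]
      ring
    · norm_num
  · filter_upwards [hhalf.eventually (eventually_notMem_lattice L),
      hhalf.eventually (eventually_cubic_ne_zero L.g₂ L.g₃ (tendsto_sq_mul_weierstrassP L))]
      with z hz hcubic
    have hinner : HasDerivAt (fun z ↦ ℘[L] (2⁻¹ * z)) (℘'[L] (2⁻¹ * z) * 2⁻¹) z :=
      (hasDerivAt_weierstrassP hz).comp z (by simpa using (hasDerivAt_id z).const_mul 2⁻¹)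
    have houter := (hasDerivAt_duplicationMap hcubic).differentiableAt.hasDerivAt
    have hderiv := (houter.comp z hinner).deriv
    simp only [Function.comp_def] at hderiv
    have hsq := deriv_duplicationMap_sq_mul_cubic hcubic
    rw [hderiv, mul_pow, mul_pow, L.derivWeierstrassP_sq _ hz]
    linear_combination hsq / 4

theorem weierstrassP_two_mul {z : ℂ} (hz : 2 * z ∉ L.lattice) :
    ℘[L] (2 * z) * (16 * (4 * ℘[L] z ^ 3 - L.g₂ * ℘[L] z - L.g₃)) =
      16 * ℘[L] z ^ 4 + 8 * L.g₂ * ℘[L] z ^ 2 + 32 * L.g₃ * ℘[L] z + L.g₂ ^ 2 := by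
  have hhalf : AnalyticOnNhd ℂ (fun u ↦ ℘[L] (2⁻¹ * u)) (L.lattice : Set ℂ)ᶜ := fun u hu ↦ by
    refine AnalyticAt.fun_comp (L.analyticOnNhd_weierstrassP _ fun hmem ↦ hu ?_) (by fun_prop)
    simpa using L.lattice.smul_mem 2 hmem
  have heq : (fun u ↦ ℘[L] u *
      (16 * (4 * ℘[L] (2⁻¹ * u) ^ 3 - L.g₂ * ℘[L] (2⁻¹ * u) - L.g₃))) =ᶠ[𝓝[≠] 0]
      fun u ↦ 16 * ℘[L] (2⁻¹ * u) ^ 4 + 8 * L.g₂ * ℘[L] (2⁻¹ * u) ^ 2 +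
        32 * L.g₃ * ℘[L] (2⁻¹ * u) + L.g₂ ^ 2 := by
    filter_upwards [eventuallyEq_duplicationMap_weierstrassP L,
      (tendsto_const_mul_nhdsNE_zero (inv_ne_zero (two_ne_zero' ℂ))).eventually
        (eventually_cubic_ne_zero L.g₂ L.g₃ (tendsto_sq_mul_weierstrassP L))] with u hu hcubic
    rw [hu, duplicationMap, div_mul_cancel₀ _ (mul_ne_zero (by norm_num) hcubic)]
  simpa using eqOn_compl_countable_of_eventuallyEq (countable_lattice L)
    (fun u hu ↦ by have := L.analyticOnNhd_weierstrassP u hu; have := hhalf u hu; fun_prop)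
    (fun u hu ↦ by have := hhalf u hu; fun_prop) heq hz

theorem cubic_weierstrassP_eq_zero_of_two_mul_mem {z : ℂ} (hz : z ∉ L.lattice)
    (h2z : 2 * z ∈ L.lattice) : 4 * ℘[L] z ^ 3 - L.g₂ * ℘[L] z - L.g₃ = 0 := by
  have hodd : ℘'[L] (-z) = ℘'[L] z := by
    convert L.derivWeierstrassP_sub_coe z ⟨_, h2z⟩ using 2
    ring
  have hzero : ℘'[L] z = 0 := self_eq_neg.mp (hodd.symm.trans (L.derivWeierstrassP_neg z))
  rw [← L.derivWeierstrassP_sq z hz, hzero, zero_pow two_ne_zero]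

-- If both invariants vanish, then `1 / z ^ 2` satisfies the differential equation of `℘`.
theorem g₂_ne_zero_or_g₃_ne_zero (L : PeriodPair) : L.g₂ ≠ 0 ∨ L.g₃ ≠ 0 := by
  by_contra! ⟨h₂, h₃⟩
  have heq : ℘[L] =ᶠ[𝓝[≠] 0] fun z ↦ (z ^ 2)⁻¹ := by
    refine eventuallyEq_weierstrassP_of_deriv_sq_eq (by fun_prop) ?_ ?_
    · refine tendsto_const_nhds.congr' ?_
      filter_upwards [self_mem_nhdsWithin] with z hz
      exact (mul_inv_cancel₀ (pow_ne_zero 2 hz)).symm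
    · filter_upwards [self_mem_nhdsWithin] with z hz
      have hz : z ≠ 0 := hz
      rw [((hasDerivAt_pow 2 z).fun_inv (pow_ne_zero 2 hz)).deriv, h₂, h₃]
      field_simp
      ring
  have hhalf : ℘[L] (L.ω₁ / 2) = ((L.ω₁ / 2) ^ 2)⁻¹ :=
    eqOn_compl_countable_of_eventuallyEq (countable_lattice L) L.analyticOnNhd_weierstrassP
      (fun z hz ↦ AnalyticAt.fun_inv (by fun_prop)
        (pow_ne_zero 2 fun h : z = 0 ↦ hz (h ▸ L.lattice.zero_mem)))
      heq L.ω₁_div_two_notMem_lattice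
  have hcubic := cubic_weierstrassP_eq_zero_of_two_mul_mem L.ω₁_div_two_notMem_lattice
    (by simpa [mul_div_cancel₀] using L.ω₁_mem_lattice)
  have hω : L.ω₁ / 2 ≠ 0 := fun h ↦ L.ω₁_div_two_notMem_lattice (h ▸ L.lattice.zero_mem)
  rw [h₂, h₃, hhalf, zero_mul, sub_zero, sub_zero] at hcubic
  exact mul_ne_zero (by norm_num) (pow_ne_zero 3 (inv_ne_zero (pow_ne_zero 2 hω))) hcubic

end WeierstrassP

section HigherDerivatives

variable {L : PeriodPair} {z : ℂ}

theorem eventually_nhds_notMem_lattice (hz : z ∉ L.lattice) : ∀ᶠ w in 𝓝 z, w ∉ L.lattice :=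
  L.isClosed_lattice.isOpen_compl.mem_nhds hz

theorem hasDerivAt_derivWeierstrassP (hz : z ∉ L.lattice) :
    HasDerivAt ℘'[L] (6 * ℘[L] z ^ 2 - L.g₂ / 2) z := by
  have hD := L.analyticOnNhd_derivWeierstrassP
  have heq : deriv ℘'[L] =ᶠ[𝓝[≠] 0] fun z ↦ 6 * ℘[L] z ^ 2 - L.g₂ / 2 := by
    filter_upwards [eventually_notMem_lattice L,
      eventually_cubic_ne_zero L.g₂ L.g₃ (tendsto_sq_mul_weierstrassP L)] with u hu hcubic
    have hne : ℘'[L] u ≠ 0 := by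
      rwa [← L.derivWeierstrassP_sq u hu, pow_ne_zero_iff two_ne_zero] at hcubic
    have hsq : HasDerivAt (fun z ↦ ℘'[L] z ^ 2) ((12 * ℘[L] u ^ 2 - L.g₂) * ℘'[L] u) u :=
      ((hasDerivAt_cubic L.g₂ L.g₃ (℘[L] u)).comp u (hasDerivAt_weierstrassP hu))
        |>.congr_of_eventuallyEq <|
          (eventually_nhds_notMem_lattice hu).mono fun w hw ↦ L.derivWeierstrassP_sq w hw
    have hchain := ((hD u hu).differentiableAt.hasDerivAt.fun_pow 2).unique hsq
    refine mul_left_cancel₀ hne ?_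
    linear_combination hchain / 2
  have hderiv := eqOn_compl_countable_of_eventuallyEq (countable_lattice L) hD.deriv
    (fun u hu ↦ by have := L.analyticOnNhd_weierstrassP u hu; fun_prop) heq hz
  exact hderiv ▸ (hD z hz).differentiableAt.hasDerivAt

theorem sumInvPow_four_eq (hz : z ∉ L.lattice) :
    L.sumInvPow z 4 = ℘[L] z ^ 2 - L.g₂ / 12 := by
  have hiter := L.iteratedDeriv_weierstrassPExcept_self z (n := 2)
  rw [L.weierstrassPExcept_of_notMem z hz, iteratedDeriv_succ, iteratedDeriv_one,
    L.deriv_weierstrassP, (hasDerivAt_derivWeierstrassP hz).deriv] at hiter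
  norm_num [Nat.factorial] at hiter
  linear_combination -hiter / 6

theorem deriv_deriv_derivWeierstrassP (hz : z ∉ L.lattice) :
    deriv (deriv ℘'[L]) z = 12 * ℘[L] z * ℘'[L] z := by
  have heq : deriv ℘'[L] =ᶠ[𝓝 z] fun w ↦ 6 * ℘[L] w ^ 2 - L.g₂ / 2 :=
    (eventually_nhds_notMem_lattice hz).mono fun w hw ↦ (hasDerivAt_derivWeierstrassP hw).deriv
  rw [heq.deriv_eq,
    ((((hasDerivAt_weierstrassP hz).fun_pow 2).const_mul 6).sub_const _).deriv]
  ring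

theorem deriv_deriv_deriv_derivWeierstrassP (hz : z ∉ L.lattice) :
    deriv (deriv (deriv ℘'[L])) z = 120 * ℘[L] z ^ 3 - 18 * L.g₂ * ℘[L] z - 12 * L.g₃ := by
  have heq : deriv (deriv ℘'[L]) =ᶠ[𝓝 z] fun w ↦ 12 * ℘[L] w * ℘'[L] w :=
    (eventually_nhds_notMem_lattice hz).mono fun w hw ↦ deriv_deriv_derivWeierstrassP hw
  rw [heq.deriv_eq, (((hasDerivAt_weierstrassP hz).const_mul 12).fun_mul
    (hasDerivAt_derivWeierstrassP hz)).deriv]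
  linear_combination 12 * L.derivWeierstrassP_sq z hz

theorem sumInvPow_six_eq (hz : z ∉ L.lattice) :
    L.sumInvPow z 6 = ℘[L] z ^ 3 - 3 / 20 * L.g₂ * ℘[L] z - L.g₃ / 10 := by
  have hiter := L.iteratedDeriv_weierstrassPExcept_self z (n := 4)
  rw [L.weierstrassPExcept_of_notMem z hz, iteratedDeriv_succ, iteratedDeriv_succ,
    iteratedDeriv_succ, iteratedDeriv_one, L.deriv_weierstrassP,
    deriv_deriv_deriv_derivWeierstrassP hz] at hiter
  norm_num [Nat.factorial] at hiter
  linear_combination -hiter / 120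

theorem sumInvPow_eq_G_of_mem (hz : z ∈ L.lattice) (r : ℕ) : L.sumInvPow z r = L.G r := by
  rw [PeriodPair.sumInvPow, PeriodPair.G, ← (Equiv.addRight (⟨z, hz⟩ : L.lattice)).tsum_eq]
  simp

end HigherDerivatives

section AlgebraicallyClosedSubfield

variable {E : Type*} [Field E] {F : Subfield E} [IsAlgClosed F] {x : E}

theorem mem_of_aeval_eq_zero {p : F[X]} (hp : p ≠ 0) (hx : aeval x p = 0) : x ∈ F :=
  (IsAlgClosed.splits p).mem_subfield_of_isRoot F hp <| by
    rwa [IsRoot.def, eval_map, show F.subtype = algebraMap F E from rfl, ← aeval_def]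

theorem mem_of_pow_mem {n : ℕ} (hn : n ≠ 0) (hx : x ^ n ∈ F) : x ∈ F := by
  refine mem_of_aeval_eq_zero (X_pow_sub_C_ne_zero (Nat.pos_of_ne_zero hn) (⟨x ^ n, hx⟩ : F)) ?_
  rw [map_sub, map_pow, aeval_X, aeval_C]
  exact sub_self _

theorem mem_of_cubic_eq_zero [CharZero E] {a b : E} (ha : a ∈ F) (hb : b ∈ F)
    (hx : 4 * x ^ 3 - a * x - b = 0) : x ∈ F := by
  obtain ⟨a, rfl⟩ : ∃ c : F, algebraMap F E c = a := ⟨⟨a, ha⟩, rfl⟩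
  obtain ⟨b, rfl⟩ : ∃ c : F, algebraMap F E c = b := ⟨⟨b, hb⟩, rfl⟩
  have hp : (X ^ 3 - C (a / 4) * X - C (b / 4)).Monic := by monicity!
  refine mem_of_aeval_eq_zero hp.ne_zero ?_
  simp only [map_sub, map_mul, map_pow, aeval_X, aeval_C, map_div₀, map_ofNat]
  linear_combination hx / 4

theorem mem_of_duplication_eq [CharZero E] {a b y : E} (ha : a ∈ F) (hb : b ∈ F) (hy : y ∈ F)
    (hx : y * (16 * (4 * x ^ 3 - a * x - b)) =
      16 * x ^ 4 + 8 * a * x ^ 2 + 32 * b * x + a ^ 2) : x ∈ F := by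
  obtain ⟨a, rfl⟩ : ∃ c : F, algebraMap F E c = a := ⟨⟨a, ha⟩, rfl⟩
  obtain ⟨b, rfl⟩ : ∃ c : F, algebraMap F E c = b := ⟨⟨b, hb⟩, rfl⟩
  obtain ⟨y, rfl⟩ : ∃ c : F, algebraMap F E c = y := ⟨⟨y, hy⟩, rfl⟩
  have hp : (X ^ 4 - C (4 * y) * X ^ 3 + C (a / 2) * X ^ 2 + C (2 * b + y * a) * X +
      C (a ^ 2 / 16 + y * b)).Monic := by monicity!
  refine mem_of_aeval_eq_zero hp.ne_zero ?_
  simp only [map_sub, map_add, map_mul, map_pow, aeval_X, aeval_C, map_div₀, map_ofNat]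
  linear_combination -hx / 16

end AlgebraicallyClosedSubfield

section TorsionValues

/-- The elliptic curve `ℂ / L` in its Weierstrass form `y² = 4x³ - g₂x - g₃` is defined over `F`. -/
def HasInvariantsIn (L : PeriodPair) (F : Subfield ℂ) : Prop :=
  L.g₂ ∈ F ∧ L.g₃ ∈ F

variable {L : PeriodPair} {F : Subfield ℂ}

-- `P / Q` is the `n`-fold iterate of the duplication map, in homogeneous coordinates.
theorem exists_weierstrassP_two_pow_mul_eq (hL : HasInvariantsIn L F) (n : ℕ) :
    ∃ P Q : F[X], (∀ᶠ z in 𝓝[≠] 0, aeval (℘[L] z) Q ≠ 0) ∧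
      ∀ z, 2 ^ n * z ∉ L.lattice → ℘[L] (2 ^ n * z) * aeval (℘[L] z) Q = aeval (℘[L] z) P := by
  obtain ⟨⟨a, ha⟩, ⟨b, hb⟩⟩ : (∃ a, algebraMap F ℂ a = L.g₂) ∧
      ∃ b, algebraMap F ℂ b = L.g₃ :=
    ⟨⟨⟨_, hL.1⟩, rfl⟩, ⟨_, hL.2⟩, rfl⟩
  induction n with
  | zero => exact ⟨X, 1, by simp, by simp⟩
  | succ n ih =>
    obtain ⟨P, Q, hQ, hPQ⟩ := ih
    have hcubic (z : ℂ) (hz : 2 ^ n * z ∉ L.lattice) :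
        aeval (℘[L] z) (C 16 * Q * (C 4 * P ^ 3 - C a * P * Q ^ 2 - C b * Q ^ 3)) =
          aeval (℘[L] z) Q ^ 4 *
            (16 * (4 * ℘[L] (2 ^ n * z) ^ 3 - L.g₂ * ℘[L] (2 ^ n * z) - L.g₃)) := by
      simp only [map_sub, map_mul, map_pow, aeval_C, map_ofNat, ha, hb, ← hPQ z hz]
      ring
    refine ⟨C 16 * P ^ 4 + C (8 * a) * P ^ 2 * Q ^ 2 + C (32 * b) * P * Q ^ 3 + C (a ^ 2) * Q ^ 4,
      C 16 * Q * (C 4 * P ^ 3 - C a * P * Q ^ 2 - C b * Q ^ 3), ?_, fun z hz ↦ ?_⟩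
    · have hpow := tendsto_const_mul_nhdsNE_zero (pow_ne_zero n (two_ne_zero' ℂ))
      filter_upwards [hQ, hpow.eventually (eventually_notMem_lattice L),
        hpow.eventually (eventually_cubic_ne_zero L.g₂ L.g₃ (tendsto_sq_mul_weierstrassP L))]
        with z hQz hz hN
      rw [hcubic z hz]
      exact mul_ne_zero (pow_ne_zero 4 hQz) (mul_ne_zero (by norm_num) hN)
    · rw [pow_succ', mul_assoc] at hz ⊢
      have hz' : 2 ^ n * z ∉ L.lattice := fun h ↦ hz (by simpa using L.lattice.smul_mem 2 h)
      rw [hcubic z hz', mul_left_comm, weierstrassP_two_mul hz]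
      simp only [map_add, map_mul, map_pow, aeval_C, map_ofNat, ha, hb, ← hPQ z hz']
      ring

theorem sq_eq_one_of_weierstrassP_mul_eventuallyEq {r : ℂ} (hr : r ≠ 0)
    (heq : (fun z ↦ ℘[L] (r * z)) =ᶠ[𝓝[≠] 0] ℘[L]) : r ^ 2 = 1 := by
  have hlim := (tendsto_sq_mul_weierstrassP L).comp (tendsto_const_mul_nhdsNE_zero hr)
  have hlim' := (tendsto_sq_mul_weierstrassP L).const_mul (r ^ 2)
  rw [mul_one] at hlim'
  refine tendsto_nhds_unique hlim' (hlim.congr' ?_)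
  filter_upwards [heq] with z hz
  rw [Function.comp_apply, hz]
  ring

variable [IsAlgClosed F] {z : ℂ}

theorem weierstrassP_mem_of_two_pow_mul_sub_self_mem (hL : HasInvariantsIn L F) {n : ℕ}
    (hn : n ≠ 0) (hz : 2 ^ n * z - z ∈ L.lattice) : ℘[L] z ∈ F := by
  by_cases hmem : 2 ^ n * z ∈ L.lattice
  · have hz' : z ∈ L.lattice := by simpa using sub_mem hmem hz
    rw [L.weierstrassP_coe ⟨z, hz'⟩]
    exact zero_mem F
  obtain ⟨P, Q, hQ, hPQ⟩ := exists_weierstrassP_two_pow_mul_eq hL n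
  have hPXQ : P - X * Q ≠ 0 := fun h ↦ by
    have h2n := pow_ne_zero n (two_ne_zero' ℂ)
    have heq : (fun z ↦ ℘[L] (2 ^ n * z)) =ᶠ[𝓝[≠] 0] ℘[L] := by
      filter_upwards [hQ, (tendsto_const_mul_nhdsNE_zero h2n).eventually
        (eventually_notMem_lattice L)] with w hQw hw
      refine mul_right_cancel₀ hQw ?_
      rw [hPQ w hw, sub_eq_zero.mp h, map_mul, aeval_X]
    have hsq := sq_eq_one_of_weierstrassP_mul_eventuallyEq h2n heq
    rw [← pow_mul] at hsq
    norm_cast at hsq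
    simp [hn] at hsq
  refine mem_of_aeval_eq_zero hPXQ ?_
  have hper : ℘[L] (2 ^ n * z) = ℘[L] z := by simpa using L.weierstrassP_add_coe z ⟨_, hz⟩
  rw [map_sub, map_mul, aeval_X, ← hPQ z hmem, hper, sub_self]

theorem weierstrassP_mem_of_two_mul (hL : HasInvariantsIn L F) (hz : ℘[L] (2 * z) ∈ F) :
    ℘[L] z ∈ F := by
  by_cases hmem : z ∈ L.lattice
  · rw [L.weierstrassP_coe ⟨z, hmem⟩]
    exact zero_mem F
  by_cases h2mem : 2 * z ∈ L.lattice
  · exact mem_of_cubic_eq_zero hL.1 hL.2 (cubic_weierstrassP_eq_zero_of_two_mul_mem hmem h2mem)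
  · exact mem_of_duplication_eq hL.1 hL.2 hz (weierstrassP_two_mul h2mem)

theorem weierstrassP_mem_of_two_pow_mul (hL : HasInvariantsIn L F) {n : ℕ}
    (hz : ℘[L] (2 ^ n * z) ∈ F) : ℘[L] z ∈ F := by
  induction n with
  | zero => simpa using hz
  | succ n ih =>
    rw [pow_succ', mul_assoc] at hz
    exact ih (weierstrassP_mem_of_two_mul hL hz)

-- Multiplication by `2` acts on the finite group of torsion points, so every orbit is preperiodic.
theorem weierstrassP_mem_of_natCast_mul_mem (hL : HasInvariantsIn L F) {N : ℕ} (hN : N ≠ 0)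
    (hz : N * z ∈ L.lattice) : ℘[L] z ∈ F := by
  obtain ⟨k, m, hm, rfl⟩ := Nat.exists_eq_two_pow_mul_odd hN
  refine weierstrassP_mem_of_two_pow_mul hL (n := k)
    (weierstrassP_mem_of_two_pow_mul_sub_self_mem hL (Nat.totient_pos.mpr hm.pos).ne' ?_)
  obtain ⟨c, hc⟩ := (Nat.ModEq.pow_totient hm.coprime_two_left).symm.dvd
  have hc : (2 : ℂ) ^ m.totient - 1 = m * c := by exact_mod_cast congrArg (Int.cast : ℤ → ℂ) hc
  convert L.lattice.smul_mem c hz using 1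
  rw [zsmul_eq_mul]
  push_cast
  linear_combination (2 ^ k * z) * hc

theorem sumInvPow_four_mem (hL : HasInvariantsIn L F) {N : ℕ} (hN : N ≠ 0)
    (hz : N * z ∈ L.lattice) : L.sumInvPow z 4 ∈ F := by
  by_cases hmem : z ∈ L.lattice
  · rw [sumInvPow_eq_G_of_mem hmem, show L.G 4 = L.g₂ / 60 by rw [PeriodPair.g₂]; ring]
    exact div_mem hL.1 (ofNat_mem F 60)
  · rw [sumInvPow_four_eq hmem]
    exact sub_mem (pow_mem (weierstrassP_mem_of_natCast_mul_mem hL hN hz) 2)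
      (div_mem hL.1 (ofNat_mem F 12))

theorem sumInvPow_six_mem (hL : HasInvariantsIn L F) {N : ℕ} (hN : N ≠ 0)
    (hz : N * z ∈ L.lattice) : L.sumInvPow z 6 ∈ F := by
  by_cases hmem : z ∈ L.lattice
  · rw [sumInvPow_eq_G_of_mem hmem, show L.G 6 = L.g₃ / 140 by rw [PeriodPair.g₃]; ring]
    exact div_mem hL.2 (ofNat_mem F 140)
  · have hP := weierstrassP_mem_of_natCast_mul_mem hL hN hz
    rw [sumInvPow_six_eq hmem]
    exact sub_mem (sub_mem (pow_mem hP 3)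
      (mul_mem (mul_mem (div_mem (ofNat_mem F 3) (ofNat_mem F 20)) hL.1) hP))
      (div_mem hL.2 (ofNat_mem F 10))

end TorsionValues

section Sublattices

theorem tsum_eq_tsum_quotient_tsum_out_add {R A B : Type*} [Ring R] [AddCommGroup A] [Module R A]
    [AddCommGroup B] [UniformSpace B] [IsUniformAddGroup B] [CompleteSpace B] [T0Space B]
    (S : Submodule R A) {f : A → B} (hf : Summable f) :
    ∑' a, f a = ∑' (q : A ⧸ S) (s : S), f (q.out + s) := by
  have hout (q : A ⧸ S) : S.mkQ q.out = q := Quotient.out_eq q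
  have hzero (s : S) : S.mkQ s = 0 := (Submodule.Quotient.mk_eq_zero S).mpr s.2
  have hbij : Function.Bijective fun p : (A ⧸ S) × S ↦ p.1.out + p.2 := by
    refine ⟨fun ⟨q, s⟩ ⟨q', s'⟩ h ↦ ?_, fun a ↦ ⟨(S.mkQ a, ⟨a - (S.mkQ a).out, ?_⟩), by simp⟩⟩
    · obtain rfl : q = q' := by simpa [hout, hzero, -Submodule.mkQ_apply] using congrArg S.mkQ h
      simpa using h
    · exact (Submodule.Quotient.eq S).mp (hout (S.mkQ a)).symm
  have hsum := (Equiv.ofBijective _ hbij).summable_iff.mpr hf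
  rw [← (Equiv.ofBijective _ hbij).tsum_eq]
  exact hsum.tsum_prod

variable {M L : PeriodPair}

theorem finite_lattice_quotient (h : M.lattice ≤ L.lattice) :
    Finite (L.lattice ⧸ M.lattice.submoduleOf L.lattice) := by
  have := Module.Free.of_basis L.latticeBasis
  have := Module.Finite.of_basis L.latticeBasis
  refine Submodule.finiteQuotientOfFreeOfRankEq _ ?_
  rw [(Submodule.submoduleOfEquivOfLe h).finrank_eq, M.finrank_lattice, L.finrank_lattice]

theorem exists_natCast_mul_mem_lattice (h : M.lattice ≤ L.lattice) :
    ∃ N : ℕ, N ≠ 0 ∧ ∀ z ∈ L.lattice, N * z ∈ M.lattice := by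
  have := finite_lattice_quotient h
  refine ⟨Nat.card (L.lattice ⧸ M.lattice.submoduleOf L.lattice), Nat.card_pos.ne', fun z hz ↦ ?_⟩
  have hcard := card_nsmul_eq_zero' (x := (M.lattice.submoduleOf L.lattice).mkQ ⟨z, hz⟩)
  rw [← map_nsmul, Submodule.mkQ_apply, Submodule.Quotient.mk_eq_zero] at hcard
  rw [← nsmul_eq_mul]
  exact hcard

theorem G_eq_tsum_sumInvPow (h : M.lattice ≤ L.lattice) {k : ℕ} (hk : 2 < k) :
    L.G k = ∑' q : L.lattice ⧸ M.lattice.submoduleOf L.lattice, M.sumInvPow (-q.out.1) k := by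
  have hsum : Summable fun l : L.lattice ↦ ((l : ℂ) ^ k)⁻¹ := by
    simpa using (L.hasSum_sumInvPow 0 hk).summable
  rw [PeriodPair.G, tsum_eq_tsum_quotient_tsum_out_add (M.lattice.submoduleOf L.lattice) hsum]
  refine tsum_congr fun q ↦ ?_
  rw [PeriodPair.sumInvPow, ← (Submodule.submoduleOfEquivOfLe h).toEquiv.tsum_eq]
  refine tsum_congr fun s ↦ ?_
  rw [sub_neg_eq_add, add_comm]
  rfl

theorem HasInvariantsIn.of_lattice_le {F : Subfield ℂ} [IsAlgClosed F] (hM : HasInvariantsIn M F)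
    (h : M.lattice ≤ L.lattice) : HasInvariantsIn L F := by
  have := finite_lattice_quotient h
  obtain ⟨N, hN, hmem⟩ := exists_natCast_mul_mem_lattice h
  have htorsion (l : L.lattice) : N * -(l : ℂ) ∈ M.lattice := hmem _ (neg_mem l.2)
  cases nonempty_fintype (L.lattice ⧸ M.lattice.submoduleOf L.lattice)
  constructor
  · rw [PeriodPair.g₂, G_eq_tsum_sumInvPow h (by norm_num), tsum_fintype]
    exact mul_mem (ofNat_mem F 60) (sum_mem fun q _ ↦ sumInvPow_four_mem hM hN (htorsion _))
  · rw [PeriodPair.g₃, G_eq_tsum_sumInvPow h (by norm_num), tsum_fintype]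
    exact mul_mem (ofNat_mem F 140) (sum_mem fun q _ ↦ sumInvPow_six_mem hM hN (htorsion _))

end Sublattices

section Scaling

/-- The period pair `(αω₁, αω₂)` of the homothetic lattice `α • L`. -/
def scaledPeriodPair (L : PeriodPair) {α : ℂ} (hα : α ≠ 0) : PeriodPair where
  ω₁ := α * L.ω₁
  ω₂ := α * L.ω₂
  indep := by
    have hmap := L.indep.map' (LinearMap.mulLeft ℝ α)
      (LinearMap.ker_eq_bot.mpr (mul_right_injective₀ hα))
    rwa [← FinVec.map_eq] at hmap

variable {L : PeriodPair} {α : ℂ} (hα : α ≠ 0)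

theorem lattice_scaledPeriodPair :
    (scaledPeriodPair L hα).lattice = L.lattice.map (LinearMap.mulLeft ℤ α) := by
  rw [PeriodPair.lattice, PeriodPair.lattice, Submodule.map_span, Set.image_pair]
  rfl

theorem lattice_scaledPeriodPair_le_iff {M : PeriodPair} :
    (scaledPeriodPair L hα).lattice ≤ M.lattice ↔ ∀ z ∈ L.lattice, α * z ∈ M.lattice := by
  rw [lattice_scaledPeriodPair, Submodule.map_le_iff_le_comap]
  rfl

theorem G_scaledPeriodPair (k : ℕ) : (scaledPeriodPair L hα).G k = (α ^ k)⁻¹ * L.G k := by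
  rw [PeriodPair.G, PeriodPair.G, lattice_scaledPeriodPair, ← tsum_mul_left,
    ← (L.lattice.equivMapOfInjective (LinearMap.mulLeft ℤ α)
      (mul_right_injective₀ hα)).toEquiv.tsum_eq]
  refine tsum_congr fun l ↦ ?_
  rw [← mul_inv, ← mul_pow]
  rfl

theorem g₂_scaledPeriodPair : (scaledPeriodPair L hα).g₂ = (α ^ 4)⁻¹ * L.g₂ := by
  rw [PeriodPair.g₂, PeriodPair.g₂, G_scaledPeriodPair, mul_left_comm]

theorem g₃_scaledPeriodPair : (scaledPeriodPair L hα).g₃ = (α ^ 6)⁻¹ * L.g₃ := by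
  rw [PeriodPair.g₃, PeriodPair.g₃, G_scaledPeriodPair, mul_left_comm]

variable {F : Subfield ℂ}

theorem HasInvariantsIn.scaledPeriodPair (hL : HasInvariantsIn L F) (hαF : α ∈ F) :
    HasInvariantsIn (scaledPeriodPair L hα) F := by
  rw [HasInvariantsIn, g₂_scaledPeriodPair, g₃_scaledPeriodPair]
  exact ⟨mul_mem (inv_mem (pow_mem hαF 4)) hL.1, mul_mem (inv_mem (pow_mem hαF 6)) hL.2⟩

variable [IsAlgClosed F]

theorem hasInvariantsIn_scaledPeriodPair_iff (hL : HasInvariantsIn L F) :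
    HasInvariantsIn (scaledPeriodPair L hα) F ↔ α ∈ F := by
  refine ⟨fun hαL ↦ ?_, hL.scaledPeriodPair hα⟩
  have mem_of_weight {k : ℕ} (hk : k ≠ 0) {g : ℂ} (hg : g ≠ 0) (hgF : g ∈ F)
      (hαg : (α ^ k)⁻¹ * g ∈ F) : α ∈ F := by
    refine mem_of_pow_mem hk ?_
    rw [← inv_mem_iff, ← mul_div_cancel_right₀ (α ^ k)⁻¹ hg]
    exact div_mem hαg hgF
  rw [HasInvariantsIn, g₂_scaledPeriodPair, g₃_scaledPeriodPair] at hαL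
  rcases g₂_ne_zero_or_g₃_ne_zero L with hg₂ | hg₃
  · exact mem_of_weight (by norm_num) hg₂ hL.1 hαL.1
  · exact mem_of_weight (by norm_num) hg₃ hL.2 hαL.2

theorem hasInvariantsIn_iff_of_lattice_le {M : PeriodPair} (h : M.lattice ≤ L.lattice) :
    HasInvariantsIn L F ↔ HasInvariantsIn M F := by
  refine ⟨fun hL ↦ ?_, fun hM ↦ hM.of_lattice_le h⟩
  obtain ⟨N, hN, hmem⟩ := exists_natCast_mul_mem_lattice h
  have hN : (N : ℂ) ≠ 0 := Nat.cast_ne_zero.mpr hN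
  exact (hL.scaledPeriodPair hN (natCast_mem F N)).of_lattice_le
    ((lattice_scaledPeriodPair_le_iff hN).mpr hmem)

end Scaling

section AdditiveSubgroups

theorem exists_periodPair_lattice_eq {Λ : AddSubgroup ℂ} (hdisc : DiscreteTopology Λ)
    (hspan : Submodule.span ℝ (Λ : Set ℂ) = ⊤) :
    ∃ L : PeriodPair, L.lattice = Λ.toIntSubmodule := by
  have : DiscreteTopology Λ.toIntSubmodule := hdisc
  have : IsZLattice ℝ Λ.toIntSubmodule := ⟨hspan⟩
  have := ZLattice.module_finite ℝ Λ.toIntSubmodule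
  have := ZLattice.module_free ℝ Λ.toIntSubmodule
  have hrank : Module.finrank ℤ Λ.toIntSubmodule = 2 := by
    rw [ZLattice.rank ℝ, Complex.finrank_real_complex]
  let b := Module.finBasisOfFinrankEq ℤ Λ.toIntSubmodule hrank
  let B := b.ofZLatticeBasis ℝ Λ.toIntSubmodule
  have hB : ![B 0, B 1] = B := by ext i; fin_cases i <;> rfl
  refine ⟨⟨B 0, B 1, hB ▸ B.linearIndependent⟩, ?_⟩
  rw [PeriodPair.lattice, ← b.ofZLatticeBasis_span ℝ, ← Matrix.range_cons_cons_empty, hB]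

variable {Λ : AddSubgroup ℂ} {L : PeriodPair}

theorem tsum_ne_zero_inv_pow_eq_G (hL : L.lattice = Λ.toIntSubmodule) {k : ℕ} (hk : k ≠ 0) :
    ∑' w : {w : ℂ // w ∈ Λ ∧ w ≠ 0}, ((w : ℂ) ^ k)⁻¹ = L.G k := by
  classical
  rw [PeriodPair.G]
  refine (tsum_subtype {w : ℂ | w ∈ Λ ∧ w ≠ 0} fun w ↦ (w ^ k)⁻¹).trans <| Eq.trans ?_
    (tsum_subtype (L.lattice : Set ℂ) fun w ↦ (w ^ k)⁻¹).symm
  refine tsum_congr fun w ↦ ?_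
  by_cases hw : w = 0 <;> simp [Set.indicator_apply, hL, hw, hk]

theorem g₂_eq_g₂ (hL : L.lattice = Λ.toIntSubmodule) : g₂ Λ = L.g₂ := by
  rw [g₂, tsum_ne_zero_inv_pow_eq_G hL four_ne_zero, PeriodPair.g₂]

theorem g₃_eq_g₃ (hL : L.lattice = Λ.toIntSubmodule) : g₃ Λ = L.g₃ := by
  rw [g₃, tsum_ne_zero_inv_pow_eq_G hL (by norm_num), PeriodPair.g₃]

theorem hasInvariantsIn_algebraicClosure_iff (k : Type*) [Field k] [Algebra k ℂ]
    (hL : L.lattice = Λ.toIntSubmodule) :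
    HasInvariantsIn L (algebraicClosure k ℂ).toSubfield ↔
      IsAlgebraic k (g₂ Λ) ∧ IsAlgebraic k (g₃ Λ) := by
  rw [g₂_eq_g₂ hL, g₃_eq_g₃ hL]
  exact and_congr mem_algebraicClosure_iff mem_algebraicClosure_iff

end AdditiveSubgroups

theorem stmt_3_general {k : Type*} [Field k] [Algebra k ℂ] {Λ Λ' : AddSubgroup ℂ}
    (hdisc : DiscreteTopology Λ) (hdisc' : DiscreteTopology Λ')
    (hspan : Submodule.span ℝ (Λ : Set ℂ) = ⊤) (hspan' : Submodule.span ℝ (Λ' : Set ℂ) = ⊤)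
    (h₂ : IsAlgebraic k (g₂ Λ)) (h₃ : IsAlgebraic k (g₃ Λ)) {α : ℂ} (hα : α ≠ 0)
    (hsub : ∀ z ∈ Λ, α * z ∈ Λ') :
    IsAlgebraic k α ↔ IsAlgebraic k (g₂ Λ') ∧ IsAlgebraic k (g₃ Λ') := by
  obtain ⟨L, hL⟩ := exists_periodPair_lattice_eq hdisc hspan
  obtain ⟨L', hL'⟩ := exists_periodPair_lattice_eq hdisc' hspan'
  have : IsAlgClosed (algebraicClosure k ℂ).toSubfield :=
    (algebraicClosure.isAlgClosure k ℂ).isAlgClosed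
  have hle : (scaledPeriodPair L hα).lattice ≤ L'.lattice := by
    rw [lattice_scaledPeriodPair_le_iff, hL, hL']
    exact hsub
  calc IsAlgebraic k α
    _ ↔ α ∈ (algebraicClosure k ℂ).toSubfield := mem_algebraicClosure_iff.symm
    _ ↔ HasInvariantsIn (scaledPeriodPair L hα) (algebraicClosure k ℂ).toSubfield :=
      (hasInvariantsIn_scaledPeriodPair_iff hα
        ((hasInvariantsIn_algebraicClosure_iff k hL).mpr ⟨h₂, h₃⟩)).symm
    _ ↔ HasInvariantsIn L' (algebraicClosure k ℂ).toSubfield :=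
      (hasInvariantsIn_iff_of_lattice_le hle).symm
    _ ↔ _ := hasInvariantsIn_algebraicClosure_iff k hL'

/-- Let `Λ` and `Λ'` be lattices in `ℂ` with CM by `R = τ(𝓞 K)` such that
`g₂ Λ`, `g₃ Λ` are algebraic over `ℚ`, and let `α ≠ 0` with `α·Λ ⊆ Λ'`. Then `α` is algebraic
over `ℚ` iff both `g₂ Λ'` and `g₃ Λ'` are algebraic over `ℚ`. -/
theorem stmt_3
    (K : Type*) [Field K] [NumberField K]
    (hdeg : Module.finrank ℚ K = 2)
    (hcplx : IsEmpty (K →+* ℝ))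
    (τ : K →+* ℂ)
    (Λ Λ' : AddSubgroup ℂ)
    (hdisc : DiscreteTopology Λ) (hdisc' : DiscreteTopology Λ')
    (hspan : Submodule.span ℝ (Λ : Set ℂ) = ⊤)
    (hspan' : Submodule.span ℝ (Λ' : Set ℂ) = ⊤)
    (hCM : {z : ℂ | ∀ w ∈ Λ, z * w ∈ Λ} =
      Set.range fun a : 𝓞 K => τ (algebraMap (𝓞 K) K a))
    (hCM' : {z : ℂ | ∀ w ∈ Λ', z * w ∈ Λ'} =
      Set.range fun a : 𝓞 K => τ (algebraMap (𝓞 K) K a))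
    (h2 : IsAlgebraic ℚ (g₂ Λ)) (h3 : IsAlgebraic ℚ (g₃ Λ))
    (α : ℂ) (hα : α ≠ 0)
    (hsub : ∀ z ∈ Λ, α * z ∈ Λ') :
    IsAlgebraic ℚ α ↔ (IsAlgebraic ℚ (g₂ Λ') ∧ IsAlgebraic ℚ (g₃ Λ')) := by
  exact stmt_3_general hdisc hdisc' hspan hspan' h2 h3 hα hsub
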